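/- For every g ≥ 1, the map sending an elementary sequence φ of length g to the function δ_φ : {1,…,2g} → {0,1} defined by δ_φ(i) = 1 − ψ(i) + ψ(i−1), where ψ is the final sequence stretched from φ, is well defined (its values lie in {0,1}) and is a bijection from the set of elementary sequences of length g onto the set of symmetric functions δ : {1,…,2g} → {0,1}, i.e. those satisfying δ(i) + δ(2g+1−i) = 1 for all 1 ≤ i ≤ g. -/

import Mathlib

/-- `φ` is an elementary sequence of length `g`, encoded as a function `ℕ → ℕ` normalised
so that `φ i = φ g` for `i ≥ g` (a canonical extension of a function on `{0,…,g}`):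
`φ 0 = 0` and `φ i ≤ φ (i+1) ≤ φ i + 1` for `0 ≤ i < g`. -/
def IsElemSeq (g : ℕ) (φ : ℕ → ℕ) : Prop :=
  φ 0 = 0 ∧ (∀ i < g, φ i ≤ φ (i + 1) ∧ φ (i + 1) ≤ φ i + 1) ∧ ∀ i, g ≤ i → φ i = φ g

/-- The final sequence `ψ : {0,…,2g} → ℕ` stretched from an elementary sequence `φ` of
length `g`: `ψ i = φ i` for `0 ≤ i ≤ g` and `ψ (2g - i) = g - i + φ i` for `0 ≤ i ≤ g`. -/
def stretched (g : ℕ) (φ : ℕ → ℕ) : ℕ → ℕ := fun i =>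
  if i ≤ g then φ i else (i - g) + φ (2 * g - i)

/-- The function `δ_φ : {1,…,2g} → {0,1}`, `δ_φ i = 1 - ψ i + ψ (i-1)` (where `ψ` is the
final sequence stretched from `φ`), encoded as a function `ℕ → ℕ` normalised to vanish
outside `{1,…,2g}`. -/
def deltaOf (g : ℕ) (φ : ℕ → ℕ) : ℕ → ℕ := fun i =>
  if 1 ≤ i ∧ i ≤ 2 * g then 1 + stretched g φ (i - 1) - stretched g φ i else 0

/-- `δ : {1,…,2g} → {0,1}` is symmetric: `δ i + δ (2g+1-i) = 1` for `1 ≤ i ≤ g`; encoded as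
a function `ℕ → ℕ` with values `≤ 1` on `{1,…,2g}` normalised to vanish elsewhere. -/
def IsSymDelta (g : ℕ) (δ : ℕ → ℕ) : Prop :=
  (∀ i, 1 ≤ i → i ≤ 2 * g → δ i ≤ 1) ∧
  (∀ i, 1 ≤ i → i ≤ g → δ i + δ (2 * g + 1 - i) = 1) ∧
  ∀ i, ¬(1 ≤ i ∧ i ≤ 2 * g) → δ i = 0

theorem deltaOf_low (g : ℕ) (φ : ℕ → ℕ) (i : ℕ) (h : i < g) :
    deltaOf g φ (i + 1) = 1 + φ i - φ (i + 1) := by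
  have h1 : 1 ≤ i + 1 ∧ i + 1 ≤ 2 * g := by omega
  have h2 : i ≤ g := by omega
  have h3 : i + 1 ≤ g := by omega
  simp only [deltaOf, stretched, if_pos h1, Nat.add_sub_cancel, if_pos h2, if_pos h3]

theorem deltaOf_high (g : ℕ) (φ : ℕ → ℕ) (i : ℕ) (h : i < g) :
    deltaOf g φ (2 * g - i) = φ (i + 1) - φ i := by
  have h1 : 1 ≤ 2 * g - i ∧ 2 * g - i ≤ 2 * g := by omega
  have h2 : ¬ (2 * g - i ≤ g) := by omega
  have h3 : 2 * g - (2 * g - i) = i := by omega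
  have h4 : 2 * g - (2 * g - i - 1) = i + 1 := by omega
  simp only [deltaOf, stretched, if_pos h1, if_neg h2, h3, h4]
  split_ifs with h5
  · have h6 : i + 1 = g := by omega
    have h7 : 2 * g - i - 1 = i + 1 := by omega
    rw [h7]; omega
  · omega

theorem deltaOf_out (g : ℕ) (φ : ℕ → ℕ) (i : ℕ) (h : ¬(1 ≤ i ∧ i ≤ 2 * g)) :
    deltaOf g φ i = 0 := by
  simp only [deltaOf, if_neg h]

theorem index_cases (g i : ℕ) : (¬(1 ≤ i ∧ i ≤ 2 * g)) ∨ (∃ k, k < g ∧ i = k + 1) ∨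
    ∃ k, k < g ∧ i = 2 * g - k := by
  by_cases h : 1 ≤ i ∧ i ≤ 2 * g
  · right
    by_cases h' : i ≤ g
    · exact Or.inl ⟨i - 1, by omega, by omega⟩
    · exact Or.inr ⟨2 * g - i, by omega, by omega⟩
  · exact Or.inl h

/-- For every `g ≥ 1`, the map `φ ↦ δ_φ` is well defined (its values lie in `{0,1}`, and
`δ_φ` is symmetric) and is a bijection from the set of elementary sequences of length `g`
onto the set of symmetric functions `δ : {1,…,2g} → {0,1}`. -/
theorem stmt7 :
    ∀ g : ℕ, 1 ≤ g →
      Set.BijOn (deltaOf g) {φ : ℕ → ℕ | IsElemSeq g φ} {δ : ℕ → ℕ | IsSymDelta g δ} := by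
  intro g _
  refine ⟨?_, ?_, ?_⟩
  · rintro φ ⟨_, hs, _⟩
    refine ⟨?_, ?_, deltaOf_out g φ⟩
    · intro i _ _
      rcases index_cases g i with h | ⟨k, hk, rfl⟩ | ⟨k, hk, rfl⟩
      · omega
      · rw [deltaOf_low g φ k hk]; have := hs k hk; omega
      · rw [deltaOf_high g φ k hk]; have := hs k hk; omega
    · intro i h1 h2
      obtain ⟨k, rfl⟩ : ∃ k, i = k + 1 := ⟨i - 1, by omega⟩
      have e : 2 * g + 1 - (k + 1) = 2 * g - k := by omega
      rw [e, deltaOf_low g φ k h2, deltaOf_high g φ k h2]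
      have := hs k h2; omega
  · rintro φ ⟨h0, hs, hc⟩ χ ⟨k0, ks, kc⟩ he
    have key : ∀ i, i ≤ g → φ i = χ i := by
      intro i
      induction i with
      | zero => intro _; rw [h0, k0]
      | succ n ih =>
        intro hn
        have e := congrFun he (n + 1)
        rw [deltaOf_low g φ n hn, deltaOf_low g χ n hn] at e
        have := ih (by omega)
        have := hs n hn
        have := ks n hn
        omega
    funext i
    by_cases hi : i ≤ g
    · exact key i hi
    · rw [hc i (by omega), kc i (by omega), key g le_rfl]
  · rintro δ ⟨hb, hsym, hz⟩
    let φ : ℕ → ℕ := fun i => ∑ k ∈ Finset.range (min i g), (1 - δ (k + 1))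
    have hstep : ∀ i < g, φ (i + 1) = φ i + (1 - δ (i + 1)) := by
      intro i hi
      have e1 : min (i + 1) g = i + 1 := by omega
      have e2 : min i g = i := by omega
      simp only [φ, e1, e2, Finset.sum_range_succ]
    refine ⟨φ, ⟨by simp [φ], ?_, ?_⟩, ?_⟩
    · intro i hi
      have := hstep i hi
      omega
    · intro i hi
      have e1 : min i g = g := by omega
      simp only [φ, e1, min_self]
    · funext i
      rcases index_cases g i with h | ⟨k, hk, rfl⟩ | ⟨k, hk, rfl⟩
      · rw [deltaOf_out g φ i h, hz i h]
      · rw [deltaOf_low g φ k hk, hstep k hk]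
        have := hb (k + 1) (by omega) (by omega)
        omega
      · rw [deltaOf_high g φ k hk, hstep k hk]
        have := hsym (k + 1) (by omega) (by omega)
        have e : 2 * g + 1 - (k + 1) = 2 * g - k := by omega
        rw [e] at this
        omega
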